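/- Let a₋ > 0, a₊ > 0 and set δ = 2(a₊ − a₋)/(a₊ + a₋). Let δ₃ be a real number and suppose ε₁, ε₃ are real numbers satisfying ε₃ − ε₁ = δ₃ and a₋·h(ε₁) + a₊·h(ε₃) = a₋·h(δ₃). Then |ε₃ − δ₃| = |ε₁| ≤ (1/2)|δ₃ δ|. Moreover, ε₃ has the same sign as δ₃ (in particular ε₃ = 0 iff δ₃ = 0), and ε₁ has the same sign as the product −δ·δ₃. -/

import Mathlib

/-- The function `h` from the paper: `h(ε) = ε` if `ε ≥ 0`, `h(ε) = sinh ε` if `ε < 0`. -/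
noncomputable def hfun (ε : ℝ) : ℝ := if 0 ≤ ε then ε else Real.sinh ε

/-!
Write `a`, `b` for `a₋`, `a₊`. Both sign claims hold for every strictly increasing `h` with
`h 0 = 0`. The interaction equation reads `a (h δ₃ - h ε₁) = b h ε₃`, so `δ₃ - ε₁` has the sign of
`ε₃`, and hence so does `2 δ₃ = ε₃ + (δ₃ - ε₁)`. It also reads
`a ((h ε₃ - h δ₃) + h ε₁) = (a - b) h ε₃`, and both terms of the sum on the left have the sign of
`ε₁`.

The bound `(a + b) |ε₁| ≤ |(a - b) δ₃|` follows once `ε₁` and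
`(a + b) ε₁ - (a - b) δ₃ = b ε₃ - a (δ₃ - ε₁)` do not have the same sign. Eliminating `b / a` with
the interaction equation leaves an inequality between values of `h` alone, which follows from
`sinh x ≤ x cosh x` for `x ≥ 0` and the addition formulas.
-/

section OrderedAlgebra

variable {K : Type*}

lemma sign_add_of_sign_eq [AddCommGroup K] [LinearOrder K] [IsOrderedAddMonoid K] {x y : K}
    (h : SignType.sign x = SignType.sign y) : SignType.sign (x + y) = SignType.sign x := by
  rcases lt_trichotomy x 0 with hx | rfl | hx
  · have hy : y < 0 := sign_eq_neg_one_iff.1 (h ▸ sign_neg hx)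
    rw [sign_neg hx, sign_neg (add_neg hx hy)]
  · rw [zero_add, h]
  · have hy : 0 < y := sign_eq_one_iff.1 (h ▸ sign_pos hx)
    rw [sign_pos hx, sign_pos (add_pos hx hy)]

lemma sign_sub_of_strictMono {L : Type*} [AddCommGroup K] [LinearOrder K] [IsOrderedAddMonoid K]
    [AddCommGroup L] [LinearOrder L] [IsOrderedAddMonoid L] {f : K → L} (hf : StrictMono f)
    (x y : K) : SignType.sign (f x - f y) = SignType.sign (x - y) := by
  rcases lt_trichotomy x y with h | rfl | h
  · rw [sign_neg (sub_neg.2 h), sign_neg (sub_neg.2 (hf h))]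
  · rw [sub_self, sub_self, sign_zero, sign_zero]
  · rw [sign_pos (sub_pos.2 h), sign_pos (sub_pos.2 (hf h))]

lemma sign_of_strictMono {L : Type*} [Zero K] [LinearOrder K] [Zero L] [LinearOrder L]
    {f : K → L} (hf : StrictMono f) (hf₀ : f 0 = 0) (x : K) :
    SignType.sign (f x) = SignType.sign x :=
  StrictMono.sign_comp (f := (⟨f, hf₀⟩ : ZeroHom K L)) hf x

lemma sign_mul_of_pos_left [Ring K] [LinearOrder K] [IsStrictOrderedRing K] {a : K} (ha : 0 < a)
    (x : K) : SignType.sign (a * x) = SignType.sign x := by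
  rw [sign_mul, sign_pos ha, one_mul]

lemma abs_le_abs_of_mul_sub_nonpos [Ring K] [LinearOrder K] [IsStrictOrderedRing K] {x y : K}
    (h : x * (x - y) ≤ 0) : |x| ≤ |y| := by
  rcases eq_or_ne x 0 with rfl | hx
  · rw [abs_zero]
    exact abs_nonneg y
  · have hxy : x * x ≤ x * y := by rwa [mul_sub, sub_nonpos] at h
    refine le_of_mul_le_mul_left ?_ (abs_pos.2 hx)
    calc |x| * |x| = x * x := abs_mul_abs_self x
      _ ≤ |x * y| := hxy.trans (le_abs_self _)
      _ = |x| * |y| := abs_mul x y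

lemma real_sign_eq_coe_sign (x : ℝ) : Real.sign x = (SignType.sign x : ℝ) := by
  rcases lt_trichotomy x 0 with h | rfl | h
  · simp [Real.sign_of_neg h, sign_neg h]
  · simp
  · simp [Real.sign_of_pos h, sign_pos h]

end OrderedAlgebra

section Interaction

variable {K : Type*} [CommRing K] [LinearOrder K] [IsStrictOrderedRing K] {h : K → K}
  {a b ε₁ ε₃ δ₃ : K}

lemma sign_sub_reflected (hh : StrictMono h) (h₀ : h 0 = 0) (ha : 0 < a) (hb : 0 < b)
    (hint : a * h ε₁ + b * h ε₃ = a * h δ₃) :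
    SignType.sign (δ₃ - ε₁) = SignType.sign ε₃ := by
  have key : a * (h δ₃ - h ε₁) = b * h ε₃ := by linear_combination -hint
  calc SignType.sign (δ₃ - ε₁)
      = SignType.sign (a * (h δ₃ - h ε₁)) := by
        rw [sign_mul_of_pos_left ha, sign_sub_of_strictMono hh]
    _ = SignType.sign ε₃ := by
        rw [key, sign_mul_of_pos_left hb, sign_of_strictMono hh h₀]

lemma sign_transmitted (hh : StrictMono h) (h₀ : h 0 = 0) (ha : 0 < a) (hb : 0 < b)
    (hδ : ε₃ - ε₁ = δ₃) (hint : a * h ε₁ + b * h ε₃ = a * h δ₃) :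
    SignType.sign ε₃ = SignType.sign δ₃ := by
  calc SignType.sign ε₃
      = SignType.sign (ε₃ + (δ₃ - ε₁)) :=
        (sign_add_of_sign_eq (sign_sub_reflected hh h₀ ha hb hint).symm).symm
    _ = SignType.sign (δ₃ + δ₃) := by congr 1; linear_combination hδ
    _ = SignType.sign δ₃ := sign_add_of_sign_eq rfl

lemma sign_reflected (hh : StrictMono h) (h₀ : h 0 = 0) (ha : 0 < a) (hb : 0 < b)
    (hδ : ε₃ - ε₁ = δ₃) (hint : a * h ε₁ + b * h ε₃ = a * h δ₃) :
    SignType.sign ε₁ = SignType.sign ((a - b) * δ₃) := by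
  have hsub : SignType.sign (h ε₃ - h δ₃) = SignType.sign ε₁ := by
    rw [sign_sub_of_strictMono hh, ← hδ, sub_sub_cancel]
  have key : a * ((h ε₃ - h δ₃) + h ε₁) = (a - b) * h ε₃ := by linear_combination hint
  calc SignType.sign ε₁
      = SignType.sign ((h ε₃ - h δ₃) + h ε₁) := by
        rw [sign_add_of_sign_eq (hsub.trans (sign_of_strictMono hh h₀ ε₁).symm), hsub]
    _ = SignType.sign ((a - b) * h ε₃) := by rw [← key, sign_mul_of_pos_left ha]
    _ = SignType.sign ((a - b) * δ₃) := by
        rw [sign_mul, sign_mul, sign_of_strictMono hh h₀, sign_transmitted hh h₀ ha hb hδ hint]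

end Interaction

section Sinh

open Real

variable {x y : ℝ}

lemma sinh_le_mul_cosh (hx : 0 ≤ x) : sinh x ≤ x * cosh x := by
  have hderiv : ∀ t ∈ interior (Set.Icc 0 x), deriv sinh t ≤ cosh x := by
    intro t ht
    have ht : t ∈ Set.Icc 0 x := interior_subset ht
    rw [Real.deriv_sinh, cosh_le_cosh, abs_of_nonneg ht.1, abs_of_nonneg hx]
    exact ht.2
  have := (convex_Icc 0 x).image_sub_le_mul_sub_of_deriv_le continuous_sinh.continuousOn
    differentiable_sinh.differentiableOn hderiv 0 (Set.left_mem_Icc.2 hx) x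
    (Set.right_mem_Icc.2 hx) hx
  rwa [sinh_zero, sub_zero, sub_zero, mul_comm] at this

lemma sinh_add_mul_cosh_le_sinh_add (hx : 0 ≤ x) (hy : 0 ≤ y) :
    sinh x + y * cosh x ≤ sinh (x + y) := by
  have hsinh : sinh x * 1 ≤ sinh x * cosh y :=
    mul_le_mul_of_nonneg_left (one_le_cosh y) (sinh_nonneg_iff.2 hx)
  have hcosh : cosh x * y ≤ cosh x * sinh y :=
    mul_le_mul_of_nonneg_left (self_le_sinh_iff.2 hy) (cosh_pos x).le
  rw [sinh_add]
  linarith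

lemma mul_sinh_le_mul_sinh (hx : 0 ≤ x) (hxy : x ≤ y) : y * sinh x ≤ x * sinh y := by
  have hyx : 0 ≤ y - x := sub_nonneg.2 hxy
  calc y * sinh x = x * sinh x + (y - x) * sinh x := by ring
    _ ≤ x * sinh x + (y - x) * (x * cosh x) := by gcongr; exact sinh_le_mul_cosh hx
    _ = x * (sinh x + (y - x) * cosh x) := by ring
    _ ≤ x * sinh (x + (y - x)) := by gcongr; exact sinh_add_mul_cosh_le_sinh_add hx hyx
    _ = x * sinh y := by rw [add_sub_cancel]

lemma two_mul_sinh_le_mul_one_add_cosh (hx : 0 ≤ x) : 2 * sinh x ≤ x * (1 + cosh x) := by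
  obtain ⟨t, rfl⟩ : ∃ t, x = 2 * t := ⟨x / 2, by ring⟩
  have ht : 0 ≤ t := by linarith
  calc 2 * sinh (2 * t) = 4 * cosh t * sinh t := by rw [sinh_two_mul]; ring
    _ ≤ 4 * cosh t * (t * cosh t) := by
        have := cosh_pos t
        gcongr
        exact sinh_le_mul_cosh ht
    _ = 2 * t * (1 + cosh (2 * t)) := by
        rw [cosh_two_mul]
        linear_combination 2 * t * cosh_sq t

lemma add_two_mul_mul_sinh_le (hx : 0 ≤ x) (hy : 0 ≤ y) :
    (x + 2 * y) * sinh x ≤ x * (sinh (x + y) + y) := by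
  calc (x + 2 * y) * sinh x = x * sinh x + y * (2 * sinh x) := by ring
    _ ≤ x * sinh x + y * (x * (1 + cosh x)) := by
        exact add_le_add_right
          (mul_le_mul_of_nonneg_left (two_mul_sinh_le_mul_one_add_cosh hx) hy) _
    _ = x * (sinh x + y * cosh x + y) := by ring
    _ ≤ x * (sinh (x + y) + y) := by
        gcongr
        exact sinh_add_mul_cosh_le_sinh_add hx hy

lemma add_mul_sinh_sub_sinh_le (hy : 0 ≤ y) (hyx : y ≤ x) :
    (x + y) * (sinh x - sinh y) ≤ (x - y) * sinh (x + y) := by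
  obtain ⟨s, d, rfl, rfl⟩ : ∃ s d, x = s + d ∧ y = s - d :=
    ⟨(x + y) / 2, (x - y) / 2, by ring, by ring⟩
  have hd : 0 ≤ d := by linarith
  have hds : d ≤ s := by linarith
  calc (s + d + (s - d)) * (sinh (s + d) - sinh (s - d))
      = 4 * cosh s * (s * sinh d) := by rw [sinh_add, sinh_sub]; ring
    _ ≤ 4 * cosh s * (d * sinh s) := by
        have := cosh_pos s
        exact mul_le_mul_of_nonneg_left (mul_sinh_le_mul_sinh hd hds) (by positivity)
    _ = (s + d - (s - d)) * sinh (s + d + (s - d)) := by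
        rw [show s + d + (s - d) = 2 * s by ring, sinh_two_mul]
        ring

end Sinh

section HFun

open Real

variable {x z a b ε₁ ε₃ δ₃ : ℝ}

lemma hfun_of_nonneg (hx : 0 ≤ x) : hfun x = x := if_pos hx

lemma hfun_of_nonpos (hx : x ≤ 0) : hfun x = sinh x := by
  rcases hx.lt_or_eq with hx | rfl
  · exact if_neg hx.not_ge
  · rw [hfun_of_nonneg le_rfl, sinh_zero]

lemma hfun_zero : hfun 0 = 0 := hfun_of_nonneg le_rfl

lemma hfun_le_self (x : ℝ) : hfun x ≤ x := by
  rcases le_total 0 x with hx | hx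
  · exact (hfun_of_nonneg hx).le
  · exact (hfun_of_nonpos hx).trans_le (sinh_le_self_iff.2 hx)

lemma strictMono_hfun : StrictMono hfun := by
  refine StrictMonoOn.Iic_union_Ici (a := 0) ?_ ?_
  · exact (sinh_strictMono.strictMonoOn _).congr fun x hx ↦ (hfun_of_nonpos hx).symm
  · exact strictMonoOn_id.congr fun x hx ↦ (hfun_of_nonneg hx).symm

lemma sub_two_mul_mul_hfun_le (hx : 0 ≤ x) (hz : z ≤ 0) :
    (z - 2 * x) * hfun z ≤ z * (hfun (z - x) - hfun x) := by
  have key := add_two_mul_mul_sinh_le (neg_nonneg.2 hz) hx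
  rw [show -z + x = -(z - x) by ring, sinh_neg, sinh_neg] at key
  rw [hfun_of_nonneg hx, hfun_of_nonpos hz, hfun_of_nonpos (by linarith)]
  linarith

lemma mul_hfun_sub_hfun_le (hx : x ≤ 0) (hz : z ≤ 2 * x) :
    z * (hfun (z - x) - hfun x) ≤ (z - 2 * x) * hfun z := by
  have key := add_mul_sinh_sub_sinh_le (neg_nonneg.2 hx) (show -x ≤ -(z - x) by linarith)
  rw [show -(z - x) + -x = -z by ring, sinh_neg, sinh_neg, sinh_neg] at key
  rw [hfun_of_nonpos hx, hfun_of_nonpos (by linarith), hfun_of_nonpos (by linarith)]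
  linarith

lemma reflected_mul_sub_nonpos_of_pos (ha : 0 < a) (hε₃ : 0 < ε₃) (hδ₃ : 0 < δ₃)
    (hint : a * hfun ε₁ + b * hfun ε₃ = a * hfun δ₃) :
    ε₁ * (b * ε₃ - a * (δ₃ - ε₁)) ≤ 0 := by
  rw [hfun_of_nonneg hε₃.le, hfun_of_nonneg hδ₃.le] at hint
  have hdefect : b * ε₃ - a * (δ₃ - ε₁) = a * (ε₁ - hfun ε₁) := by linear_combination hint
  rw [hdefect]
  rcases le_total 0 ε₁ with hε₁ | hε₁
  · rw [hfun_of_nonneg hε₁, sub_self, mul_zero, mul_zero]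
  · exact mul_nonpos_of_nonpos_of_nonneg hε₁
      (mul_nonneg ha.le (sub_nonneg.2 (hfun_le_self ε₁)))

lemma reflected_mul_sub_nonpos_of_neg (ha : 0 < a) (hε₃ : ε₃ < 0) (hδε : δ₃ - ε₁ < 0)
    (hδ : ε₃ - ε₁ = δ₃) (hint : a * hfun ε₁ + b * hfun ε₃ = a * hfun δ₃) :
    ε₁ * (b * ε₃ - a * (δ₃ - ε₁)) ≤ 0 := by
  subst hδ
  have hneg : hfun ε₃ < 0 := hfun_zero ▸ strictMono_hfun hε₃
  have hdefect : (b * ε₃ - a * (ε₃ - ε₁ - ε₁)) * hfun ε₃ =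
      a * (ε₃ * (hfun (ε₃ - ε₁) - hfun ε₁) - (ε₃ - 2 * ε₁) * hfun ε₃) := by
    linear_combination ε₃ * hint
  rcases le_total 0 ε₁ with hε₁ | hε₁
  · refine mul_nonpos_of_nonneg_of_nonpos hε₁ (nonpos_of_mul_nonneg_left ?_ hneg)
    rw [hdefect]
    exact mul_nonneg ha.le (sub_nonneg.2 (sub_two_mul_mul_hfun_le hε₁ hε₃.le))
  · refine mul_nonpos_of_nonpos_of_nonneg hε₁ (nonneg_of_mul_nonpos_left ?_ hneg)
    rw [hdefect]
    exact mul_nonpos_of_nonneg_of_nonpos ha.le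
      (sub_nonpos.2 (mul_hfun_sub_hfun_le hε₁ (by linarith)))

lemma reflected_mul_sub_nonpos (ha : 0 < a) (hb : 0 < b) (hδ : ε₃ - ε₁ = δ₃)
    (hint : a * hfun ε₁ + b * hfun ε₃ = a * hfun δ₃) :
    ε₁ * (b * ε₃ - a * (δ₃ - ε₁)) ≤ 0 := by
  have hsub := sign_sub_reflected strictMono_hfun hfun_zero ha hb hint
  have htrans := sign_transmitted strictMono_hfun hfun_zero ha hb hδ hint
  rcases lt_trichotomy ε₃ 0 with hε₃ | rfl | hε₃
  · have hδε : δ₃ - ε₁ < 0 := sign_eq_neg_one_iff.1 (hsub.trans (sign_neg hε₃))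
    exact reflected_mul_sub_nonpos_of_neg ha hε₃ hδε hδ hint
  · have hδ₃ : δ₃ = 0 := sign_eq_zero_iff.1 (htrans.symm.trans sign_zero)
    have hε₁ : ε₁ = 0 := by linarith
    rw [hε₁, zero_mul]
  · have hδ₃ : 0 < δ₃ := sign_eq_one_iff.1 (htrans.symm.trans (sign_pos hε₃))
    exact reflected_mul_sub_nonpos_of_pos ha hε₃ hδ₃ hint

lemma abs_reflected_le (ha : 0 < a) (hb : 0 < b) (hδ : ε₃ - ε₁ = δ₃)
    (hint : a * hfun ε₁ + b * hfun ε₃ = a * hfun δ₃) :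
    |ε₁| ≤ |(a - b) / (a + b) * δ₃| := by
  have hab : 0 < a + b := add_pos ha hb
  have hsign : ε₁ * ((a + b) * ε₁ - (a - b) * δ₃) ≤ 0 := by
    convert reflected_mul_sub_nonpos ha hb hδ hint using 2
    linear_combination -b * hδ
  apply abs_le_abs_of_mul_sub_nonpos
  have hdiv : ε₁ * (ε₁ - (a - b) / (a + b) * δ₃) =
      ε₁ * ((a + b) * ε₁ - (a - b) * δ₃) / (a + b) := by
    field_simp
  rw [hdiv]
  exact div_nonpos_of_nonpos_of_nonneg hsign hab.le

end HFun

/-- Interaction estimate for a 3-wave hitting a composite wave (Accurate solver). -/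
theorem stmt2 (am ap δ δ₃ ε₁ ε₃ : ℝ) (ham : 0 < am) (hap : 0 < ap)
    (hδ : δ = 2 * (ap - am) / (ap + am))
    (h1 : ε₃ - ε₁ = δ₃)
    (h2 : am * hfun ε₁ + ap * hfun ε₃ = am * hfun δ₃) :
    |ε₃ - δ₃| = |ε₁| ∧ |ε₁| ≤ (1/2) * |δ₃ * δ| ∧
    Real.sign ε₃ = Real.sign δ₃ ∧ Real.sign ε₁ = Real.sign (-(δ * δ₃)) := by
  have hsum : 0 < am + ap := add_pos ham hap
  have hδ_mul : -(δ * δ₃) = 2 / (am + ap) * ((am - ap) * δ₃) := by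
    rw [hδ, add_comm ap am]
    ring
  refine ⟨by rw [← h1, sub_sub_cancel], ?_, ?_, ?_⟩
  · calc |ε₁| ≤ |(am - ap) / (am + ap) * δ₃| := abs_reflected_le ham hap h1 h2
      _ = |1 / 2 * -(δ * δ₃)| := by rw [hδ_mul]; ring_nf
      _ = 1 / 2 * |δ₃ * δ| := by rw [abs_mul, abs_neg, abs_of_pos one_half_pos, mul_comm δ]
  · rw [real_sign_eq_coe_sign, real_sign_eq_coe_sign,
      sign_transmitted strictMono_hfun hfun_zero ham hap h1 h2]
  · rw [real_sign_eq_coe_sign, real_sign_eq_coe_sign, hδ_mul,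
      sign_mul_of_pos_left (div_pos two_pos hsum),
      sign_reflected strictMono_hfun hfun_zero ham hap h1 h2]
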